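/- Let N > K ≥ 1 and fix X ∈ 𝔾_N. Let M be a probability measure on the countable set 𝔾_K such that M(Y) = 0 unless Y is contained in a certain fixed bounded interval [a,b] ⊂ ℝ. If Σ_{Y ∈ 𝔾_K} M(Y) · S̃_{ν|K}(Y) = S̃_{ν|N}(X) for every partition ν ∈ 𝕐(K), then M(Y) = Λ^N_K(X,Y) for all Y ∈ 𝔾_K. -/

import Mathlib

open scoped BigOperators
open Classical

noncomputable section

def Lambda (q zm zp : ℝ) : Set ℝ :=
  {x | ∃ m : ℤ, x = zm * q ^ m} ∪ {x | ∃ n : ℤ, x = zp * q ^ n}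

def qInterval (q zm zp a b : ℝ) : Set ℝ :=
  if b < 0 then Set.Ico a b ∩ Lambda q zm zp
  else if a < 0 then Set.Icc a b ∩ Lambda q zm zp
  else Set.Ioc a b ∩ Lambda q zm zp

def Conf (q zm zp : ℝ) (N : ℕ) : Type :=
  {x : Fin N → ℝ // StrictMono x ∧ ∀ i, x i ∈ Lambda q zm zp}

def Interlaces (q zm zp : ℝ) {N : ℕ} (Y : Conf q zm zp N) (X : Conf q zm zp (N+1)) : Prop :=
  ∀ i : Fin N, Y.1 i ∈ qInterval q zm zp (X.1 i.castSucc) (X.1 i.succ)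

def vprod {N : ℕ} (x : Fin N → ℝ) : ℝ :=
  ∏ p ∈ Finset.univ.filter (fun p : Fin N × Fin N => p.1 < p.2), (x p.2 - x p.1)

def qpochR (a q : ℝ) (n : ℕ) : ℝ := ∏ m ∈ Finset.range n, (1 - a * q ^ m)

def qlink (q zm zp : ℝ) (N : ℕ) (X : Conf q zm zp (N+1)) (Y : Conf q zm zp N) : ℝ :=
  if Interlaces q zm zp Y X then
    (∏ i, |Y.1 i|) * qpochR q q N * vprod Y.1 / vprod X.1
  else 0

/-- The multi-step link Λ^{K+d}_K, the composition of one-step q-links. -/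
def linkPow (q zm zp : ℝ) (K : ℕ) : (d : ℕ) → Conf q zm zp (K + d) → Conf q zm zp K → ℝ
  | 0, X, Y => if X = Y then 1 else 0
  | (d+1), X, Y =>
      ∑' Z : Conf q zm zp (K + d), qlink q zm zp (K + d) X Z * linkPow q zm zp K d Z Y

/-- The Schur Laurent polynomial S_{λ|N}(u) = det[u_j^{λ_i+N−i}] / ∏_{i<j}(u_i−u_j). -/
def schurL (N : ℕ) (l : Fin N → ℤ) (u : Fin N → ℝ) : ℝ :=
  (Matrix.of fun i j : Fin N => u j ^ (l i + (N : ℤ) - 1 - (i : ℕ))).det /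
    ∏ p ∈ Finset.univ.filter (fun p : Fin N × Fin N => p.1 < p.2), (u p.1 - u p.2)

/-- Normalized Schur polynomial S̃_{ν|N}(y) = S_{ν|N}(y)/S_{ν|N}(1,q,…,q^{N−1}). -/
def schurTilde (q : ℝ) (N : ℕ) (l : Fin N → ℤ) (y : Fin N → ℝ) : ℝ :=
  schurL N l y / schurL N l (fun i => q ^ (i : ℕ))

/-- A signature of length K padded by zeros to length N. -/
def padSig (K N : ℕ) (ν : Fin K → ℤ) : Fin N → ℤ :=
  fun i => if h : (i : ℕ) < K then ν ⟨i, h⟩ else 0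



def detB {n : ℕ} (m : Fin n → ℕ) (u : Fin n → ℝ) : ℝ :=
  (Matrix.of fun i j : Fin n => u j ^ m i).det

lemma vprod_eq_prod {n : ℕ} (u : Fin n → ℝ) :
    vprod u = ∏ i, ∏ j ∈ Finset.Ioi i, (u j - u i) := by
  unfold vprod
  rw [Finset.prod_filter, Fintype.prod_prod_type]
  refine Finset.prod_congr rfl fun i _ => ?_
  rw [← Finset.prod_filter]
  refine Finset.prod_congr ?_ fun _ _ => rfl
  ext j; simp

lemma vprod_eq_detB {n : ℕ} (u : Fin n → ℝ) :
    vprod u = detB (fun i : Fin n => (i : ℕ)) u := by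
  rw [vprod_eq_prod, ← Matrix.det_vandermonde, ← Matrix.det_transpose]
  rfl

lemma vprod_pos {n : ℕ} (u : Fin n → ℝ) (hu : StrictMono u) : 0 < vprod u := by
  unfold vprod
  refine Finset.prod_pos fun p hp => ?_
  have := hu (Finset.mem_filter.1 hp).2
  linarith

lemma schurL_eq {n : ℕ} (l : Fin n → ℤ) (m : Fin n → ℕ)
    (h : ∀ i, (m (Fin.rev i) : ℤ) = l i + (n : ℤ) - 1 - (i : ℕ)) :
    ∃ s : ℝ, s ≠ 0 ∧ ∀ u : Fin n → ℝ, schurL n l u = s * (detB m u / vprod u) := by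
  let s1 : ℝ := ((Equiv.Perm.sign (Fin.revPerm : Equiv.Perm (Fin n)) : ℤˣ) : ℤ)
  let s2 : ℝ := ∏ p ∈ Finset.univ.filter (fun p : Fin n × Fin n => p.1 < p.2), (-1 : ℝ)
  have h1 : s1 ≠ 0 := by
    simp only [s1]
    exact_mod_cast (Int.cast_ne_zero (α := ℝ)).2 (Units.ne_zero _)
  have h2 : s2 ≠ 0 := Finset.prod_ne_zero_iff.2 fun _ _ => by norm_num
  refine ⟨s1 / s2, div_ne_zero h1 h2, fun u => ?_⟩
  unfold schurL
  have e1 : (Matrix.of fun i j : Fin n => u j ^ (l i + (n : ℤ) - 1 - (i : ℕ))).det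
      = s1 * detB m u := by
    unfold detB
    rw [← Matrix.det_permute]
    congr 1
    ext i j
    simp [Matrix.submatrix_apply, ← h]
  have e2 : ∏ p ∈ Finset.univ.filter (fun p : Fin n × Fin n => p.1 < p.2), (u p.1 - u p.2)
      = s2 * vprod u := by
    unfold vprod
    simp only [s2]
    rw [← Finset.prod_mul_distrib]
    exact Finset.prod_congr rfl fun _ _ => by ring
  rw [e1, e2, mul_div_mul_comm]

def qpts (q : ℝ) (n : ℕ) : Fin n → ℝ := fun i => q ^ (i : ℕ)

/-- normalisation constant -/
def Rn (q : ℝ) {n : ℕ} (m : Fin n → ℕ) : ℝ := detB m (qpts q n) / vprod (qpts q n)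

lemma schurTilde_eq {q : ℝ} {n : ℕ} (l : Fin n → ℤ) (m : Fin n → ℕ)
    (h : ∀ i, (m (Fin.rev i) : ℤ) = l i + (n : ℤ) - 1 - (i : ℕ)) (u : Fin n → ℝ) :
    schurTilde q n l u = (detB m u / vprod u) / Rn q m := by
  obtain ⟨s, hs, H⟩ := schurL_eq l m h
  unfold schurTilde Rn
  rw [H, H, mul_div_mul_left _ _ hs]
  rfl

def padm {n : ℕ} (m : Fin n → ℕ) : Fin (n+1) → ℕ := Fin.cons 0 (fun i => m i + 1)

lemma detB_padm {n : ℕ} (m : Fin n → ℕ) (u : Fin (n+1) → ℝ) :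
    detB (padm m) u =
      (Matrix.of fun i j : Fin n => u j.succ ^ (m i + 1) - u j.castSucc ^ (m i + 1)).det := by
  unfold detB
  let Bm : Matrix (Fin (n+1)) (Fin (n+1)) ℝ := Matrix.of fun i j =>
    Fin.cases (motive := fun _ => ℝ) (u 0 ^ padm m i)
      (fun j => u j.succ ^ padm m i - u j.castSucc ^ padm m i) j
  rw [Matrix.det_eq_of_forall_col_eq_smul_add_pred (B := Bm) (fun _ => 1)
    (by intro i; simp [Bm]) (by intro i j; simp [Bm]), Matrix.det_succ_row_zero,
    Fin.sum_univ_succ]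
  rw [Finset.sum_eq_zero]
  · simp only [Bm, padm, Matrix.of_apply, Fin.cases_zero, Fin.cons_zero, pow_zero]
    simp
    congr 1
    
  · intro j _
    simp [Bm, padm]

lemma detB_padm_qpts (q : ℝ) {n : ℕ} (m : Fin n → ℕ) :
    detB (padm m) (qpts q (n+1)) =
      (∏ i, (q ^ (m i + 1) - 1)) * (∏ j : Fin n, q ^ (j : ℕ)) * detB m (qpts q n) := by
  rw [detB_padm]
  unfold detB
  have h1 : (Matrix.of fun i j : Fin n => qpts q (n+1) j.succ ^ (m i + 1)
      - qpts q (n+1) j.castSucc ^ (m i + 1))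
      = Matrix.of fun i j : Fin n => (q ^ (m i + 1) - 1) *
        (Matrix.of fun i j : Fin n => q ^ (j : ℕ) * qpts q n j ^ m i) i j := by
    ext i j
    simp [qpts]
    ring
  rw [h1, Matrix.det_mul_column, mul_assoc]
  congr 1
  exact Matrix.det_mul_row (fun j : Fin n => q ^ (j : ℕ))
    (Matrix.of fun i j : Fin n => qpts q n j ^ m i)

lemma padm_id (n : ℕ) : padm (fun i : Fin n => (i : ℕ)) = fun i : Fin (n+1) => (i : ℕ) := by
  funext i
  refine Fin.cases ?_ (fun i => ?_) i <;> simp [padm]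

lemma Rn_padm {q : ℝ} (hq0 : 0 < q) {n : ℕ} (m : Fin n → ℕ) :
    Rn q (padm m) = (∏ i, (1 - q ^ (m i + 1))) / qpochR q q n * Rn q m := by
  unfold Rn
  rw [vprod_eq_detB, vprod_eq_detB, ← padm_id, detB_padm_qpts, detB_padm_qpts]
  have hQ : qpochR q q n = ∏ i : Fin n, (1 - q ^ ((i : ℕ) + 1)) := by
    unfold qpochR
    rw [Finset.prod_range]
    exact Finset.prod_congr rfl fun _ _ => by ring
  have neg : ∀ f : Fin n → ℝ, ∏ i, (f i - 1) = (∏ i : Fin n, (-1 : ℝ)) * ∏ i, (1 - f i) := by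
    intro f
    rw [← Finset.prod_mul_distrib]
    exact Finset.prod_congr rfl fun _ _ => by ring
  rw [hQ, neg, neg]
  have c1 : (∏ i : Fin n, (-1 : ℝ)) ≠ 0 := Finset.prod_ne_zero_iff.2 fun _ _ => by norm_num
  have c2 : (∏ j : Fin n, q ^ (j : ℕ)) ≠ 0 :=
    Finset.prod_ne_zero_iff.2 fun _ _ => (pow_pos hq0 _).ne'
  rw [div_mul_div_comm, mul_assoc, mul_assoc, mul_assoc, mul_assoc,
    mul_div_mul_left _ _ c1, mul_left_comm, mul_left_comm _ (∏ j : Fin n, q ^ (j : ℕ)),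
    mul_div_mul_left _ _ c2]

lemma Rn_ne_zero {q : ℝ} (hq0 : 0 < q) (hq1 : q < 1) {n : ℕ} (m : Fin n → ℕ)
    (hm : Function.Injective m) : Rn q m ≠ 0 := by
  have key : ∀ k : Fin n → ℕ, Function.Injective k → detB k (qpts q n) ≠ 0 := by
    intro k hk
    have : detB k (qpts q n) = (Matrix.vandermonde (fun i => q ^ k i)).det := by
      unfold detB
      congr 1
      ext i j
      simp [qpts, Matrix.vandermonde_apply, ← pow_mul, mul_comm]
    rw [this, Matrix.det_vandermonde_ne_zero_iff]
    intro i j hij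
    exact hk ((pow_right_strictAnti₀ hq0 hq1).injective hij)
  unfold Rn
  rw [vprod_eq_detB]
  exact div_ne_zero (key _ hm) (key _ Fin.val_injective)

lemma hs_congr {α : Type*} {f g : α → ℝ} {a b : ℝ} (h : HasSum f a) (hfg : ∀ x, g x = f x)
    (hab : b = a) : HasSum g b := by
  rw [hab, funext hfg]; exact h

lemma hs_mul {α β : Type*} {f : α → ℝ} {g : β → ℝ} {a b : ℝ} (hf : HasSum f a)
    (hg : HasSum g b) : HasSum (fun x : α × β => f x.1 * g x.2) (a * b) := by
  have hs : Summable (fun x : α × β => f x.1 * g x.2) :=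
    summable_mul_of_summable_norm hf.summable.norm hg.summable.norm
  exact hf.mul hg hs

lemma hasSum_pi_prod : ∀ {n : ℕ} (f : Fin n → ℝ → ℝ) (s : Fin n → ℝ),
    (∀ i, HasSum (f i) (s i)) →
    HasSum (fun y : Fin n → ℝ => ∏ i, f i (y i)) (∏ i, s i) := by
  intro n
  induction n with
  | zero =>
    intro f s _
    simp
  | succ n ih =>
    intro f s h
    have h1 := ih (fun i => f i.succ) (fun i => s i.succ) (fun i => h i.succ)
    have h2 := hs_mul (h 0) h1
    rw [← (Fin.consEquiv (fun _ : Fin (n+1) => ℝ)).hasSum_iff, Fin.prod_univ_succ]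
    refine hs_congr h2 (fun p => ?_) rfl
    simp [Fin.consEquiv, Fin.prod_univ_succ]

lemma Lambda_ne_zero {q zm zp : ℝ} (hq0 : 0 < q) (hzm : zm < 0) (hzp : 0 < zp) {x : ℝ}
    (hx : x ∈ Lambda q zm zp) : x ≠ 0 := by
  rcases hx with ⟨m, rfl⟩ | ⟨m, rfl⟩
  · exact mul_ne_zero hzm.ne (zpow_pos hq0 m).ne'
  · exact mul_ne_zero hzp.ne' (zpow_pos hq0 m).ne'

/-- two lattice points of the same sign differ by a power of q -/
lemma Lambda_ratio {q zm zp : ℝ} (hq0 : 0 < q) (hzm : zm < 0) (hzp : 0 < zp) {x y : ℝ}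
    (hx : x ∈ Lambda q zm zp) (hy : y ∈ Lambda q zm zp) (hxy : 0 < x * y) :
    ∃ k : ℤ, y = x * q ^ k := by
  have key : ∀ z : ℝ, ∀ m k : ℤ, z * q ^ k = z * q ^ m * q ^ (k - m) := by
    intro z m k
    rw [mul_assoc, ← zpow_add₀ hq0.ne']
    congr 2
    ring
  rcases hx with ⟨m, rfl⟩ | ⟨m, rfl⟩ <;> rcases hy with ⟨k, rfl⟩ | ⟨k, rfl⟩
  · exact ⟨k - m, key _ _ _⟩
  · have := mul_neg_of_neg_of_pos (mul_neg_of_neg_of_pos hzm (zpow_pos hq0 m))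
      (mul_pos hzp (zpow_pos hq0 k))
    linarith
  · have := mul_neg_of_pos_of_neg (mul_pos hzp (zpow_pos hq0 m))
      (mul_neg_of_neg_of_pos hzm (zpow_pos hq0 k))
    linarith
  · exact ⟨k - m, key _ _ _⟩

lemma Lambda_mul_pow {q zm zp : ℝ} (hq0 : 0 < q) {x : ℝ}
    (hx : x ∈ Lambda q zm zp) (k : ℕ) : x * q ^ k ∈ Lambda q zm zp := by
  rcases hx with ⟨m, rfl⟩ | ⟨m, rfl⟩
  · exact Or.inl ⟨m + k, by rw [zpow_add₀ hq0.ne', zpow_natCast, mul_assoc]⟩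
  · exact Or.inr ⟨m + k, by rw [zpow_add₀ hq0.ne', zpow_natCast, mul_assoc]⟩

/-- signed half-interval indicator -/
def Gx (q zm zp x y : ℝ) : ℝ :=
  if y ∈ Lambda q zm zp then
    (if 0 < x then (if 0 < y ∧ y ≤ x then 1 else 0) else (if x ≤ y ∧ y < 0 then -1 else 0))
  else 0

lemma Gx_hasSum {q zm zp : ℝ} (hq0 : 0 < q) (hq1 : q < 1) (hzm : zm < 0) (hzp : 0 < zp) {x : ℝ}
    (hx : x ∈ Lambda q zm zp) (l : ℕ) :
    HasSum (fun y => Gx q zm zp x y * (|y| * y ^ l)) (x ^ (l+1) / (1 - q ^ (l+1))) := by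
  have hx0 := Lambda_ne_zero hq0 hzm hzp hx
  have hinj : Function.Injective (fun k : ℕ => x * q ^ k) := fun i j h =>
    (pow_right_strictAnti₀ hq0 hq1).injective (mul_left_cancel₀ hx0 h)
  rw [← hinj.hasSum_iff]
  · have hg := (hasSum_geometric_of_lt_one (pow_nonneg hq0.le (l+1))
      (pow_lt_one₀ hq0.le hq1 (Nat.succ_ne_zero l))).mul_left (x ^ (l+1))
    rw [div_eq_mul_inv]
    refine hs_congr hg (fun k => ?_) rfl
    have hk : 0 < q ^ k := pow_pos hq0 k
    have hk1 : q ^ k ≤ 1 := pow_le_one₀ hq0.le hq1.le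
    have hmem := Lambda_mul_pow hq0 hx k
    simp only [Function.comp, Gx, hmem, if_true]
    rcases lt_or_gt_of_ne hx0 with h | h
    · have h1 : x * q ^ k < 0 := mul_neg_of_neg_of_pos h hk
      have h2 : x ≤ x * q ^ k := by nlinarith
      rw [if_neg h.not_gt, if_pos ⟨h2, h1⟩, abs_of_neg h1]
      ring
    · have h1 : 0 < x * q ^ k := mul_pos h hk
      have h2 : x * q ^ k ≤ x := by nlinarith
      rw [if_pos h, if_pos ⟨h1, h2⟩, abs_of_pos h1]
      ring
  · intro y hy
    have : Gx q zm zp x y = 0 := by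
      by_contra hne
      apply hy
      unfold Gx at hne
      have hyL : y ∈ Lambda q zm zp := by
        by_contra h; simp [h] at hne
      rw [if_pos hyL] at hne
      rcases lt_or_gt_of_ne hx0 with h | h
      · rw [if_neg h.not_gt] at hne
        have h' : x ≤ y ∧ y < 0 := by by_contra h'; simp [h'] at hne
        obtain ⟨k, rfl⟩ := Lambda_ratio hq0 hzm hzp hx hyL (mul_pos_of_neg_of_neg h h'.2)
        have : q ^ k ≤ 1 := by nlinarith [h'.1]
        have hk : 0 ≤ k := by
          by_contra hk
          have := one_lt_zpow_of_neg₀ hq0 hq1 (not_le.1 hk)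
          linarith
        lift k to ℕ using hk
        exact ⟨k, by simp⟩
      · rw [if_pos h] at hne
        have h' : 0 < y ∧ y ≤ x := by by_contra h'; simp [h'] at hne
        obtain ⟨k, rfl⟩ := Lambda_ratio hq0 hzm hzp hx hyL (mul_pos h h'.1)
        have : q ^ k ≤ 1 := by nlinarith [h'.2]
        have hk : 0 ≤ k := by
          by_contra hk
          have := one_lt_zpow_of_neg₀ hq0 hq1 (not_le.1 hk)
          linarith
        lift k to ℕ using hk
        exact ⟨k, by simp⟩
    rw [this, zero_mul]

lemma qInterval_ind {q zm zp : ℝ} (hq0 : 0 < q) (hzm : zm < 0) (hzp : 0 < zp) {a b : ℝ}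
    (ha : a ∈ Lambda q zm zp) (hb : b ∈ Lambda q zm zp) (hab : a < b) (y : ℝ) :
    (if y ∈ qInterval q zm zp a b then (1:ℝ) else 0) = Gx q zm zp b y - Gx q zm zp a y := by
  have ha0 := Lambda_ne_zero hq0 hzm hzp ha
  have hb0 := Lambda_ne_zero hq0 hzm hzp hb
  by_cases hy : y ∈ Lambda q zm zp
  · have hy0 := Lambda_ne_zero hq0 hzm hzp hy
    unfold qInterval Gx
    rcases lt_or_gt_of_ne ha0 with ha' | ha' <;> rcases lt_or_gt_of_ne hb0 with hb' | hb' <;>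
    rcases lt_or_gt_of_ne hy0 with hy' | hy' <;>
    simp only [hy, ha', hb', ha'.not_gt, hb'.not_gt, hy', hy'.not_gt, if_true, if_false,
      Set.mem_inter_iff, Set.mem_Ico, Set.mem_Icc, Set.mem_Ioc, and_true, true_and,
      false_and, and_false] <;>
    split_ifs <;> first | (norm_num; done) | (exfalso; grind)
  · have : y ∉ qInterval q zm zp a b := by
      unfold qInterval
      split_ifs <;> exact fun h => hy h.2
    simp [this, Gx, hy]

lemma qInterval_hasSum {q zm zp : ℝ} (hq0 : 0 < q) (hq1 : q < 1) (hzm : zm < 0) (hzp : 0 < zp)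
    {a b : ℝ} (ha : a ∈ Lambda q zm zp) (hb : b ∈ Lambda q zm zp) (hab : a < b) (l : ℕ) :
    HasSum (fun y => (if y ∈ qInterval q zm zp a b then (1:ℝ) else 0) * (|y| * y ^ l))
      ((b ^ (l+1) - a ^ (l+1)) / (1 - q ^ (l+1))) := by
  rw [sub_div]
  refine hs_congr ((Gx_hasSum hq0 hq1 hzm hzp hb l).sub (Gx_hasSum hq0 hq1 hzm hzp ha l))
    (fun y => ?_) rfl
  rw [qInterval_ind hq0 hzm hzp ha hb hab]
  ring

lemma qInterval_sub {q zm zp a b y : ℝ} (h : y ∈ qInterval q zm zp a b) :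
    a ≤ y ∧ y ≤ b ∧ y ∈ Lambda q zm zp := by
  unfold qInterval at h
  split_ifs at h
  · exact ⟨h.1.1, h.1.2.le, h.2⟩
  · exact ⟨h.1.1, h.1.2, h.2⟩
  · exact ⟨h.1.1.le, h.1.2, h.2⟩

lemma qInterval_lt {q zm zp a b c y z : ℝ} 
    (h : y ∈ qInterval q zm zp a b) (h' : z ∈ qInterval q zm zp b c) (hbc : b < c) : y < z := by
  have h1 := qInterval_sub h
  have h2 := qInterval_sub h'
  rcases lt_or_ge b 0 with hb | hb
  · unfold qInterval at h
    rw [if_pos hb] at h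
    linarith [h.1.2]
  · unfold qInterval at h'
    rw [if_neg (by linarith), if_neg (by linarith)] at h'
    linarith [h'.1.1]

/-- unnormalised one-step kernel -/
def kap (q zm zp : ℝ) (N : ℕ) (X : Conf q zm zp (N+1)) (Y : Conf q zm zp N) : ℝ :=
  if Interlaces q zm zp Y X then (∏ i, |Y.1 i|) * qpochR q q N else 0

lemma kap_hasSum_prod {q zm zp : ℝ} (hq0 : 0 < q) (hq1 : q < 1) (hzm : zm < 0) (hzp : 0 < zp)
    {N : ℕ} (X : Conf q zm zp (N+1)) (l : Fin N → ℕ) :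
    HasSum (fun Y => kap q zm zp N X Y * ∏ i, Y.1 i ^ l i)
      (qpochR q q N * ∏ i : Fin N, ((X.1 i.succ ^ (l i + 1) - X.1 i.castSucc ^ (l i + 1))
        / (1 - q ^ (l i + 1)))) := by
  have h := (hasSum_pi_prod _ _ (fun i : Fin N => qInterval_hasSum hq0 hq1 hzm hzp
    (X.2.2 i.castSucc) (X.2.2 i.succ) (X.2.1 (Fin.castSucc_lt_succ)) (l i))).mul_left
    (qpochR q q N)
  have hinj : Function.Injective (fun Y : Conf q zm zp N => Y.1) := Subtype.val_injective
  rw [← hinj.hasSum_iff] at h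
  · refine hs_congr h (fun Y => ?_) rfl
    simp only [Function.comp, kap]
    by_cases hI : Interlaces q zm zp Y X
    · rw [if_pos hI]
      have : ∀ i : Fin N, Y.1 i ∈ qInterval q zm zp (X.1 i.castSucc) (X.1 i.succ) := hI
      simp only [this, if_true, one_mul, Finset.prod_mul_distrib]
      ring
    · rw [if_neg hI]
      unfold Interlaces at hI
      push Not at hI
      obtain ⟨i, hi⟩ := hI
      rw [zero_mul]
      symm
      exact mul_eq_zero_of_right _ (Finset.prod_eq_zero (Finset.mem_univ i) (by simp [hi]))
  · intro y hy
    by_contra hne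
    apply hy
    have hi : ∀ i : Fin N, y i ∈ qInterval q zm zp (X.1 i.castSucc) (X.1 i.succ) := by
      intro i
      by_contra hi
      apply hne
      rw [Finset.prod_eq_zero (Finset.mem_univ i)]
      · simp
      · simp [hi]
    refine ⟨⟨y, ?_, fun i => (qInterval_sub (hi i)).2.2⟩, rfl⟩
    cases N with
    | zero => intro i; exact i.elim0
    | succ n =>
      rw [Fin.strictMono_iff_lt_succ]
      intro i
      exact qInterval_lt (hi i.castSucc) (hi i.succ) (X.2.1 (Fin.succ_lt_succ_iff.2 Fin.castSucc_lt_succ))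

lemma kap_nonneg {q zm zp : ℝ} (hq0 : 0 < q) (hq1 : q < 1) {N : ℕ}
    (X : Conf q zm zp (N+1)) (Y : Conf q zm zp N) : 0 ≤ kap q zm zp N X Y := by
  unfold kap
  split_ifs
  · refine mul_nonneg (Finset.prod_nonneg fun _ _ => abs_nonneg _)
      (Finset.prod_nonneg fun i _ => ?_)
    have : q * q ^ i ≤ 1 := by
      rw [← pow_succ']; exact pow_le_one₀ hq0.le hq1.le
    linarith
  · exact le_rfl

lemma kap_hasSum_det {q zm zp : ℝ} (hq0 : 0 < q) (hq1 : q < 1) (hzm : zm < 0) (hzp : 0 < zp)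
    {N : ℕ} (X : Conf q zm zp (N+1)) (m : Fin N → ℕ) :
    HasSum (fun Y => kap q zm zp N X Y * (detB m Y.1 / Rn q m))
      (detB (padm m) X.1 / Rn q (padm m)) := by
  have h1 : HasSum (fun Y => ∑ σ : Equiv.Perm (Fin N), (((Equiv.Perm.sign σ : ℤˣ) : ℤ) : ℝ) *
      (kap q zm zp N X Y * ∏ i, Y.1 i ^ m (σ i)))
      (∑ σ : Equiv.Perm (Fin N), (((Equiv.Perm.sign σ : ℤˣ) : ℤ) : ℝ) *
      (qpochR q q N * ∏ i : Fin N, ((X.1 i.succ ^ (m (σ i) + 1) - X.1 i.castSucc ^ (m (σ i) + 1))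
        / (1 - q ^ (m (σ i) + 1))))) :=
    hasSum_sum fun σ _ =>
      (kap_hasSum_prod hq0 hq1 hzm hzp X (fun i => m (σ i))).mul_left _
  have h2 := h1.mul_right (1 / Rn q m)
  refine hs_congr h2 (fun Y => ?_) ?_
  · unfold detB
    rw [Matrix.det_apply', div_eq_mul_one_div, ← mul_assoc, Finset.mul_sum]
    congr 1
    refine Finset.sum_congr rfl fun σ _ => ?_
    simp only [Matrix.of_apply]
    ring
  · rw [Rn_padm hq0, detB_padm, Matrix.det_apply']
    have : ∀ σ : Equiv.Perm (Fin N),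
        (((Equiv.Perm.sign σ : ℤˣ) : ℤ) : ℝ) *
      (qpochR q q N * ∏ i : Fin N, ((X.1 i.succ ^ (m (σ i) + 1) - X.1 i.castSucc ^ (m (σ i) + 1))
        / (1 - q ^ (m (σ i) + 1)))) = (((Equiv.Perm.sign σ : ℤˣ) : ℤ) : ℝ) *
        (∏ i : Fin N, (X.1 i.succ ^ (m (σ i) + 1) - X.1 i.castSucc ^ (m (σ i) + 1))) *
        (qpochR q q N / ∏ i, (1 - q ^ (m i + 1))) := by
      intro σ
      rw [Finset.prod_div_distrib, Equiv.prod_comp σ (fun i => 1 - q ^ (m i + 1))]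
      ring
    simp only [this, Matrix.of_apply]
    rw [← Finset.sum_mul, mul_assoc, div_eq_mul_inv, mul_inv, inv_div, one_div]

lemma detB_bound {n : ℕ} (m : Fin n → ℕ) (A : ℝ) :
    ∃ C : ℝ, ∀ u : Fin n → ℝ, (∀ i, |u i| ≤ A) → |detB m u| ≤ C := by
  have hc : IsCompact (Set.pi Set.univ (fun _ : Fin n => Set.Icc (-A) A)) :=
    isCompact_univ_pi fun _ => isCompact_Icc
  have hcont : Continuous (fun u : Fin n → ℝ => detB m u) := by
    unfold detB
    apply Continuous.matrix_det
    refine continuous_matrix fun i j => ?_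
    simp only [Matrix.of_apply]
    fun_prop
  obtain ⟨C, hC⟩ := hc.exists_bound_of_continuousOn hcont.continuousOn
  refine ⟨C, fun u hu => ?_⟩
  have := hC u (fun i _ => abs_le.1 (hu i))
  simpa using this

def Ld (q zm zp : ℝ) (K : ℕ) : (d : ℕ) → Conf q zm zp (K + d) → Conf q zm zp K → ℝ
  | 0, X, Y => if X = Y then 1 else 0
  | (d+1), X, Y =>
      ∑' Z : Conf q zm zp (K + d), kap q zm zp (K + d) X Z * Ld q zm zp K d Z Y

lemma linkPow_eq (q zm zp : ℝ) (K : ℕ) : ∀ (d : ℕ) (X : Conf q zm zp (K + d))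
    (Y : Conf q zm zp K), linkPow q zm zp K d X Y
      = Ld q zm zp K d X Y * (vprod Y.1 / vprod X.1) := by
  intro d
  induction d with
  | zero =>
    intro X Y
    simp only [linkPow, Ld]
    split_ifs with h
    · subst h
      rw [div_self (vprod_pos _ X.2.1).ne', mul_one]
    · simp
  | succ d ih =>
    intro X Y
    simp only [linkPow, Ld]
    rw [← tsum_mul_right]
    refine tsum_congr fun Z => ?_
    rw [ih]
    have hZ := (vprod_pos _ Z.2.1).ne'
    simp only [qlink, kap]
    split_ifs
    · field_simp
    · simp

lemma Ld_nonneg {q zm zp : ℝ} (hq0 : 0 < q) (hq1 : q < 1) (K : ℕ) :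
    ∀ (d : ℕ) (X : Conf q zm zp (K + d)) (Y : Conf q zm zp K), 0 ≤ Ld q zm zp K d X Y := by
  intro d
  induction d with
  | zero =>
    intro X Y
    simp only [Ld]
    split_ifs <;> norm_num
  | succ d ih =>
    intro X Y
    simp only [Ld]
    exact tsum_nonneg fun Z => mul_nonneg (kap_nonneg hq0 hq1 _ _) (ih _ _)

lemma kap_supp {q zm zp : ℝ} {N : ℕ} (X : Conf q zm zp (N+1)) (Y : Conf q zm zp N) {A : ℝ}
    (hX : ∀ i, |X.1 i| ≤ A) (h : kap q zm zp N X Y ≠ 0) : ∀ i, |Y.1 i| ≤ A := by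
  intro i
  have hI : Interlaces q zm zp Y X := by
    by_contra hI; simp [kap, hI] at h
  have h1 := qInterval_sub (hI i)
  have h2 := abs_le.1 (hX i.castSucc)
  have h3 := abs_le.1 (hX i.succ)
  exact abs_le.2 ⟨by linarith, by linarith⟩

lemma Ld_supp {q zm zp : ℝ} (K : ℕ) {A : ℝ} :
    ∀ (d : ℕ) (X : Conf q zm zp (K + d)) (Y : Conf q zm zp K), (∀ i, |X.1 i| ≤ A) →
      Ld q zm zp K d X Y ≠ 0 → ∀ i, |Y.1 i| ≤ A := by
  intro d
  induction d with
  | zero =>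
    intro X Y hX h
    have : X = Y := by by_contra h'; simp [Ld, h'] at h
    subst this
    exact hX
  | succ d ih =>
    intro X Y hX h
    by_contra hY
    apply h
    simp only [Ld]
    rw [← tsum_zero (α := ℝ) (β := Conf q zm zp (K + d))]
    refine tsum_congr fun Z => ?_
    by_cases hk : kap q zm zp (K + d) X Z = 0
    · rw [hk, zero_mul]
    · have : Ld q zm zp K d Z Y = 0 := by
        by_contra hL
        exact hY (ih Z Y (kap_supp X Z hX hk) hL)
      rw [this, mul_zero]

lemma kap_summable {q zm zp : ℝ} (hq0 : 0 < q) (hq1 : q < 1) (hzm : zm < 0) (hzp : 0 < zp)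
    {N : ℕ} (A : ℝ) : ∃ C : ℝ, ∀ X : Conf q zm zp (N+1), (∀ i, |X.1 i| ≤ A) →
      Summable (kap q zm zp N X) ∧ ∑' Y, kap q zm zp N X Y ≤ C := by
  refine ⟨qpochR q q N * ∏ i : Fin N, ((A + A) / (1 - q)), fun X hX => ?_⟩
  have h := kap_hasSum_prod hq0 hq1 hzm hzp X (fun _ => 0)
  simp only [pow_zero, Finset.prod_const_one, mul_one, zero_add, pow_one] at h
  refine ⟨h.summable, ?_⟩
  rw [h.tsum_eq]
  have hq : 0 ≤ qpochR q q N := by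
    refine (Finset.prod_nonneg fun i _ => ?_)
    have : q * q ^ i ≤ 1 := by
      rw [← pow_succ']; exact pow_le_one₀ hq0.le hq1.le
    linarith
  refine mul_le_mul_of_nonneg_left (Finset.prod_le_prod (fun i _ => ?_) fun i _ => ?_) hq
  · have := X.2.1 (Fin.castSucc_lt_succ (i := i))
    exact div_nonneg (by linarith) (by linarith)
  · refine div_le_div_of_nonneg_right ?_ (by linarith)
    have h2 := abs_le.1 (hX i.castSucc)
    have h3 := abs_le.1 (hX i.succ)
    linarith

lemma Ld_prod_summable {q zm zp : ℝ} (hq0 : 0 < q) (hq1 : q < 1) (hzm : zm < 0) (hzp : 0 < zp)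
    (K d : ℕ) {A C : ℝ} (X : Conf q zm zp (K + d + 1)) (hX : ∀ i, |X.1 i| ≤ A)
    (hC : ∀ Z : Conf q zm zp (K + d), (∀ i, |Z.1 i| ≤ A) →
      Summable (Ld q zm zp K d Z) ∧ ∑' Y, Ld q zm zp K d Z Y ≤ C) :
    Summable (fun p : Conf q zm zp (K+d) × Conf q zm zp K =>
      kap q zm zp (K+d) X p.1 * Ld q zm zp K d p.1 p.2) ∧
    ∀ Z, ∑' Y, kap q zm zp (K+d) X Z * Ld q zm zp K d Z Y ≤ kap q zm zp (K+d) X Z * C := by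
  have hle : ∀ Z, ∑' Y, kap q zm zp (K+d) X Z * Ld q zm zp K d Z Y
      ≤ kap q zm zp (K+d) X Z * C := by
    intro Z
    rw [tsum_mul_left]
    by_cases hk : kap q zm zp (K + d) X Z = 0
    · simp [hk]
    · exact mul_le_mul_of_nonneg_left (hC Z (kap_supp X Z hX hk)).2 (kap_nonneg hq0 hq1 _ _)
  refine ⟨?_, hle⟩
  obtain ⟨C1, hC1⟩ := kap_summable hq0 hq1 hzm hzp (N := K + d) A
  rw [summable_prod_of_nonneg]
  · refine ⟨fun Z => ?_, ?_⟩
    · by_cases hk : kap q zm zp (K + d) X Z = 0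
      · simp only [hk, zero_mul]; exact summable_zero
      · exact (hC Z (kap_supp X Z hX hk)).1.mul_left (kap q zm zp (K+d) X Z)
    · refine Summable.of_nonneg_of_le (fun Z => tsum_nonneg fun Y =>
        mul_nonneg (kap_nonneg hq0 hq1 _ _) (Ld_nonneg hq0 hq1 K d _ _)) hle
        ((hC1 X hX).1.mul_right C)
  · intro p
    exact mul_nonneg (kap_nonneg hq0 hq1 _ _) (Ld_nonneg hq0 hq1 K d _ _)

lemma Ld_summable {q zm zp : ℝ} (hq0 : 0 < q) (hq1 : q < 1) (hzm : zm < 0) (hzp : 0 < zp)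
    (K : ℕ) (A : ℝ) : ∀ d : ℕ, ∃ C : ℝ, 0 ≤ C ∧ ∀ X : Conf q zm zp (K+d), (∀ i, |X.1 i| ≤ A) →
      Summable (Ld q zm zp K d X) ∧ ∑' Y, Ld q zm zp K d X Y ≤ C := by
  intro d
  induction d with
  | zero =>
    refine ⟨1, zero_le_one, fun X _ => ?_⟩
    have : HasSum (Ld q zm zp K 0 X) 1 := by
      refine hs_congr (hasSum_ite_eq (X : Conf q zm zp K) (1:ℝ)) (fun Y => ?_) rfl
      simp only [Ld, eq_comm]
    exact ⟨this.summable, this.tsum_eq.le⟩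
  | succ d ih =>
    obtain ⟨C, hC0, hC⟩ := ih
    obtain ⟨C1, hC1⟩ := kap_summable hq0 hq1 hzm hzp (N := K + d) A
    refine ⟨max (C1 * C) 0, le_max_right _ _, fun X hX => ?_⟩
    obtain ⟨hs, hle⟩ := Ld_prod_summable hq0 hq1 hzm hzp K d X hX hC
    have hs' := hs.prod_symm
    refine ⟨hs'.prod, ?_⟩
    refine le_trans ?_ (le_max_left _ _)
    have e1 : ∑' Y, Ld q zm zp K (d+1) X Y
        = ∑' Z, ∑' Y, kap q zm zp (K+d) X Z * Ld q zm zp K d Z Y :=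
      (Summable.tsum_comm (f := fun Z Y => kap q zm zp (K+d) X Z * Ld q zm zp K d Z Y) hs)
    rw [e1]
    calc _ ≤ ∑' Z, kap q zm zp (K+d) X Z * C :=
          Summable.tsum_le_tsum hle hs.prod ((hC1 X hX).1.mul_right C)
      _ = (∑' Z, kap q zm zp (K+d) X Z) * C := tsum_mul_right
      _ ≤ C1 * C := mul_le_mul_of_nonneg_right (hC1 X hX).2 hC0

def padn {K : ℕ} (m : Fin K → ℕ) : (d : ℕ) → Fin (K + d) → ℕ
  | 0 => m
  | d+1 => padm (padn m d)

lemma conf_bdd {q zm zp : ℝ} {N : ℕ} (X : Conf q zm zp N) : ∃ A : ℝ, ∀ i, |X.1 i| ≤ A :=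
  ⟨∑ i, |X.1 i|, fun i => Finset.single_le_sum (f := fun i => |X.1 i|)
    (fun _ _ => abs_nonneg _) (Finset.mem_univ i)⟩

lemma Ld_moment {q zm zp : ℝ} (hq0 : 0 < q) (hq1 : q < 1) (hzm : zm < 0) (hzp : 0 < zp)
    (K : ℕ) (m : Fin K → ℕ) : ∀ (d : ℕ) (X : Conf q zm zp (K+d)),
    HasSum (fun Y => Ld q zm zp K d X Y * (detB m Y.1 / Rn q m))
      (detB (padn m d) X.1 / Rn q (padn m d)) := by
  intro d
  induction d with
  | zero =>
    intro X
    refine hs_congr (hasSum_ite_eq (X : Conf q zm zp K) (detB m X.1 / Rn q m)) (fun Y => ?_) rfl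
    simp only [Ld]
    by_cases h : X = Y
    · subst h; simp
    · rw [if_neg h, if_neg (fun h' => h h'.symm), zero_mul]
  | succ d ih =>
    intro X
    obtain ⟨A, hX⟩ := conf_bdd X
    obtain ⟨C, hC0, hC⟩ := Ld_summable hq0 hq1 hzm hzp K A d
    obtain ⟨hs, hle⟩ := Ld_prod_summable hq0 hq1 hzm hzp K d X hX hC
    obtain ⟨B, hB⟩ := detB_bound m A
    have hs2 : Summable (fun p : Conf q zm zp (K+d) × Conf q zm zp K =>
      kap q zm zp (K+d) X p.1 * Ld q zm zp K d p.1 p.2 * (detB m p.2.1 / Rn q m)) := by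
      refine Summable.of_norm_bounded (hs.mul_right (B / |Rn q m|)) fun p => ?_
      rw [norm_mul, Real.norm_of_nonneg
        (mul_nonneg (kap_nonneg hq0 hq1 _ _) (Ld_nonneg hq0 hq1 K d _ _))]
      by_cases hk : kap q zm zp (K + d) X p.1 = 0
      · simp [hk]
      by_cases hL : Ld q zm zp K d p.1 p.2 = 0
      · simp [hL]
      refine mul_le_mul_of_nonneg_left ?_
        (mul_nonneg (kap_nonneg hq0 hq1 _ _) (Ld_nonneg hq0 hq1 K d _ _))
      rw [Real.norm_eq_abs, abs_div]
      exact div_le_div_of_nonneg_right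
        (hB _ (Ld_supp K d _ _ (kap_supp X p.1 hX hk) hL)) (abs_nonneg _)
    have h1 : HasSum (fun p : Conf q zm zp (K+d) × Conf q zm zp K =>
      kap q zm zp (K+d) X p.1 * Ld q zm zp K d p.1 p.2 * (detB m p.2.1 / Rn q m))
      (detB (padn m (d+1)) X.1 / Rn q (padn m (d+1))) := by
      have hf := hs2.hasSum.prod_fiberwise (g := fun Z => kap q zm zp (K+d) X Z *
        (detB (padn m d) Z.1 / Rn q (padn m d))) (fun Z => by
          refine hs_congr ((ih Z).mul_left (kap q zm zp (K+d) X Z)) (fun Y => ?_) rfl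
          ring)
      have hk := kap_hasSum_det hq0 hq1 hzm hzp X (padn m d)
      have := hf.unique hk
      have h0 := hs2.hasSum
      rw [this] at h0
      exact h0
    have h2 := ((Equiv.prodComm (Conf q zm zp K) (Conf q zm zp (K+d))).hasSum_iff.2 h1)
    refine (h2.prod_fiberwise (g := fun Y => Ld q zm zp K (d+1) X Y * (detB m Y.1 / Rn q m))
      fun Y => ?_)
    have hs3 : Summable fun Z => kap q zm zp (K+d) X Z * Ld q zm zp K d Z Y :=
      hs.prod_symm.prod_factor Y
    exact hs3.hasSum.mul_right _

lemma padn_lt {K : ℕ} (m : Fin K → ℕ) : ∀ (d : ℕ) (j : Fin (K+d)), (j : ℕ) < d →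
    padn m d j = j := by
  intro d
  induction d with
  | zero => intro j h; omega
  | succ d ih =>
    intro j
    change Fin (K + d + 1) at j
    refine Fin.cases ?_ (fun j => ?_) j
    · intro _; simp [padn, padm]
    · intro h
      simp only [padn, padm, Fin.cons_succ, Fin.val_succ] at h ⊢
      rw [ih j (by omega)]

lemma padn_ge {K : ℕ} (m : Fin K → ℕ) : ∀ (d : ℕ) (j : Fin (K+d)) (k : Fin K),
    (j : ℕ) = k + d → padn m d j = m k + d := by
  intro d
  induction d with
  | zero =>
    intro j k h
    have : j = k := Fin.ext h
    subst this
    rfl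
  | succ d ih =>
    intro j
    change Fin (K + d + 1) at j
    refine Fin.cases ?_ (fun j => ?_) j
    · intro k h; simp at h
    · intro k h
      simp only [padn, padm, Fin.cons_succ, Fin.val_succ] at h ⊢
      rw [ih j k (by omega)]
      ring

lemma detB_eq_zero {n : ℕ} (m : Fin n → ℕ) (hm : ¬ Function.Injective m) (u : Fin n → ℝ) :
    detB m u = 0 := by
  unfold Function.Injective at hm
  push Not at hm
  obtain ⟨i, j, hij, hne⟩ := hm
  exact Matrix.det_zero_of_row_eq hne (by funext k; simp [hij])

lemma detB_perm {n : ℕ} (m : Fin n → ℕ) (σ : Equiv.Perm (Fin n)) (u : Fin n → ℝ) :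
    detB m u = (((Equiv.Perm.sign σ : ℤˣ) : ℤ) : ℝ) * detB (m ∘ σ) u := by
  have h : detB (m ∘ σ) u = (((Equiv.Perm.sign σ : ℤˣ) : ℤ) : ℝ) * detB m u := by
    unfold detB
    rw [← Matrix.det_permute]
    rfl
  rw [h, ← mul_assoc]
  rcases Int.units_eq_one_or (Equiv.Perm.sign σ) with h | h <;> simp [h]

lemma vprod_mul_poly {n : ℕ} (g : Polynomial ℝ) (u : Fin n → ℝ) :
    vprod u * ∏ j, g.eval (u j) =
      ∑ r ∈ Fintype.piFinset (fun _ : Fin n => Finset.range (g.natDegree + 1)),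
        (∏ i, g.coeff (r i)) * detB (fun i : Fin n => (i : ℕ) + r i) u := by
  have h1 : vprod u * ∏ j, g.eval (u j)
      = Matrix.det (Matrix.of fun i j : Fin n => g.eval (u j) *
        (Matrix.of fun i j : Fin n => u j ^ (i : ℕ)) i j) := by
    rw [Matrix.det_mul_row, vprod_eq_detB, mul_comm]
    rfl
  rw [h1]
  have h2 := (Matrix.detRowAlternating (n := Fin n) (R := ℝ)).toMultilinearMap.map_sum_finset
    (fun (i : Fin n) (c : ℕ) => (fun j : Fin n => g.coeff c * u j ^ ((i : ℕ) + c)))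
    (fun _ : Fin n => Finset.range (g.natDegree + 1))
  have e : (Matrix.of fun i j : Fin n => g.eval (u j) *
        (Matrix.of fun i j : Fin n => u j ^ (i : ℕ)) i j)
      = fun i : Fin n => ∑ c ∈ Finset.range (g.natDegree + 1),
        (fun j : Fin n => g.coeff c * u j ^ ((i : ℕ) + c)) := by
    funext i j
    simp only [Matrix.of_apply, Finset.sum_apply, Polynomial.eval_eq_sum_range, Finset.sum_mul]
    refine Finset.sum_congr rfl fun c _ => ?_
    ring
  rw [e]
  refine h2.trans (Finset.sum_congr rfl fun r _ => ?_)
  exact Matrix.det_mul_column (fun i => g.coeff (r i))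
    (Matrix.of fun i j : Fin n => u j ^ ((i : ℕ) + r i))

/-- tent function -/
def tent (q x y : ℝ) : ℝ := max 0 (1 - |y - x| / (|x| * (1 - q)))

lemma Lambda_gap {q zm zp : ℝ} (hq0 : 0 < q) (hq1 : q < 1) (hzm : zm < 0) (hzp : 0 < zp) {x y : ℝ}
    (hx : x ∈ Lambda q zm zp) (hy : y ∈ Lambda q zm zp) (hne : y ≠ x) :
    |x| * (1 - q) ≤ |y - x| := by
  have hx0 := Lambda_ne_zero hq0 hzm hzp hx
  have hy0 := Lambda_ne_zero hq0 hzm hzp hy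
  rcases lt_or_gt_of_ne (mul_ne_zero hx0 hy0) with h | h
  · rcases lt_or_gt_of_ne hx0 with hx' | hx'
    · have hy' : 0 < y := by nlinarith
      rw [abs_of_neg hx', abs_of_pos (by linarith)]
      nlinarith
    · have hy' : y < 0 := by nlinarith
      rw [abs_of_pos hx', abs_of_neg (by linarith)]
      nlinarith
  · obtain ⟨k, rfl⟩ := Lambda_ratio hq0 hzm hzp hx hy h
    have e : x * q ^ k - x = x * (q ^ k - 1) := by ring
    rw [e, abs_mul]
    refine mul_le_mul_of_nonneg_left ?_ (abs_nonneg _)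
    have hk0 : k ≠ 0 := by rintro rfl; simp at hne
    rcases lt_or_gt_of_ne hk0 with hk | hk
    · have h1 : q ^ (-1 : ℤ) ≤ q ^ k := zpow_le_zpow_right_of_le_one₀ hq0 hq1.le (by omega)
      have h2 : 1 - q ≤ q ^ (-1 : ℤ) - 1 := by
        rw [zpow_neg_one]
        have : q * q⁻¹ = 1 := mul_inv_cancel₀ hq0.ne'
        nlinarith [sq_nonneg (q - 1), inv_pos.2 hq0]
      exact le_trans (by linarith) (le_abs_self _)
    · have h1 : q ^ k ≤ q ^ (1 : ℤ) := zpow_le_zpow_right_of_le_one₀ hq0 hq1.le (by omega)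
      rw [zpow_one] at h1
      rw [abs_sub_comm]
      exact le_trans (by linarith) (le_abs_self _)

lemma tent_eq {q zm zp : ℝ} (hq0 : 0 < q) (hq1 : q < 1) (hzm : zm < 0) (hzp : 0 < zp) {x y : ℝ}
    (hx : x ∈ Lambda q zm zp) (hy : y ∈ Lambda q zm zp) :
    tent q x y = if y = x then 1 else 0 := by
  unfold tent
  split_ifs with h
  · simp [h]
  · have hx0 := Lambda_ne_zero hq0 hzm hzp hx
    have hp : 0 < |x| * (1 - q) := mul_pos (abs_pos.2 hx0) (by linarith)
    have := (one_le_div hp).2 (Lambda_gap hq0 hq1 hzm hzp hx hy h)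
    exact max_eq_left (by linarith)

lemma tent_sum {q zm zp : ℝ} (hq0 : 0 < q) (hq1 : q < 1) (hzm : zm < 0) (hzp : 0 < zp) {K : ℕ}
    (Y0 : Conf q zm zp K) {y : ℝ} (hy : y ∈ Lambda q zm zp) :
    ∑ k, tent q (Y0.1 k) y = if y ∈ Set.range Y0.1 then 1 else 0 := by
  split_ifs with h
  · obtain ⟨k, rfl⟩ := h
    rw [Finset.sum_eq_single k]
    · rw [tent_eq hq0 hq1 hzm hzp (Y0.2.2 k) hy, if_pos rfl]
    · intro j _ hj
      rw [tent_eq hq0 hq1 hzm hzp (Y0.2.2 j) hy, if_neg]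
      exact fun h => hj (Y0.2.1.injective h.symm)
    · simp
  · refine Finset.sum_eq_zero fun k _ => ?_
    rw [tent_eq hq0 hq1 hzm hzp (Y0.2.2 k) hy, if_neg]
    rintro rfl
    exact h ⟨k, rfl⟩

lemma uniq {q zm zp : ℝ} (hq0 : 0 < q) (hq1 : q < 1) (hzm : zm < 0) (hzp : 0 < zp) {K : ℕ}
    (D : Conf q zm zp K → ℝ) (hD : Summable D) (A : ℝ)
    (hsupp : ∀ Y, D Y ≠ 0 → ∀ i, |Y.1 i| ≤ A)
    (hm : ∀ m : Fin K → ℕ, StrictMono m →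
      HasSum (fun Y => D Y * (detB m Y.1 / vprod Y.1)) 0) (Y0 : Conf q zm zp K) : D Y0 = 0 := by
  have hall : ∀ m : Fin K → ℕ, HasSum (fun Y => D Y * (detB m Y.1 / vprod Y.1)) 0 := by
    intro m
    by_cases hinj : Function.Injective m
    · have hsm : StrictMono (m ∘ Tuple.sort m) :=
        (Tuple.monotone_sort m).strictMono_of_injective
          (hinj.comp (Tuple.sort m).injective)
      refine hs_congr ((hm _ hsm).mul_left
        (((Equiv.Perm.sign (Tuple.sort m) : ℤˣ) : ℤ) : ℝ)) (fun Y => ?_) (mul_zero _).symm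
      rw [detB_perm m (Tuple.sort m)]
      ring
    · refine hs_congr hasSum_zero (fun Y => ?_) rfl
      rw [detB_eq_zero m hinj]
      simp
  have hpoly : ∀ g : Polynomial ℝ, HasSum (fun Y => D Y * ∏ j, g.eval (Y.1 j)) 0 := by
    intro g
    have h := hasSum_sum (s := Fintype.piFinset
        (fun _ : Fin K => Finset.range (g.natDegree + 1)))
      (fun r _ => (hall (fun i : Fin K => (i : ℕ) + r i)).mul_left (∏ i, g.coeff (r i)))
    refine hs_congr h (fun Y => ?_) (by simp)
    have hV := (vprod_pos _ Y.2.1).ne'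
    have e := vprod_mul_poly g Y.1
    rw [show ∏ j, g.eval (Y.1 j) = (vprod Y.1 * ∏ j, g.eval (Y.1 j)) / vprod Y.1 by
      field_simp, e, Finset.sum_div, Finset.mul_sum]
    refine Finset.sum_congr rfl fun r _ => ?_
    ring
  let g0 : ℝ → ℝ := fun y => ∑ k, tent q (Y0.1 k) y
  have hg0 : Continuous g0 := by
    simp only [g0, tent]
    fun_prop
  have hap : ∀ n : ℕ, ∃ p : Polynomial ℝ, ∀ x ∈ Set.Icc (-A) A,
      |p.eval x - g0 x| < 1 / ((n : ℝ) + 1) := fun n =>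
    exists_polynomial_near_of_continuousOn (-A) A g0 hg0.continuousOn _ Nat.one_div_pos_of_nat
  choose p hp using hap
  have hg01 : ∀ y ∈ Lambda q zm zp, |g0 y| ≤ 1 := by
    intro y hy
    simp only [g0]
    rw [tent_sum hq0 hq1 hzm hzp Y0 hy]
    split_ifs <;> simp
  have hlim : Filter.Tendsto (fun n => ∑' Y, D Y * ∏ j, (p n).eval (Y.1 j)) Filter.atTop
      (nhds (∑' Y, D Y * ∏ j, g0 (Y.1 j))) := by
    have hbs : Summable (fun Y => |D Y| * ∏ j : Fin K, (2:ℝ)) := hD.abs.mul_right _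
    refine tendsto_tsum_of_dominated_convergence hbs (fun Y => ?_) (Filter.Eventually.of_forall fun n Y => ?_)
    · by_cases h0 : D Y = 0
      · simp [h0]
      refine Filter.Tendsto.const_mul _ (tendsto_finsetProd _ fun j _ => ?_)
      rw [tendsto_iff_dist_tendsto_zero]
      refine squeeze_zero (fun _ => dist_nonneg) (fun n => ?_)
        tendsto_one_div_add_atTop_nhds_zero_nat
      exact (hp n _ (abs_le.1 (hsupp Y h0 j))).le
    · by_cases h0 : D Y = 0
      · simp [h0]
      rw [norm_mul, Real.norm_eq_abs]
      refine mul_le_mul_of_nonneg_left ?_ (abs_nonneg _)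
      rw [Real.norm_eq_abs, Finset.abs_prod]
      refine Finset.prod_le_prod (fun _ _ => abs_nonneg _) fun j _ => ?_
      have h1 := (hp n _ (abs_le.1 (hsupp Y h0 j))).le
      have h2 := hg01 _ (Y.2.2 j)
      have h3 : 1 / ((n : ℝ) + 1) ≤ 1 := by
        rw [div_le_one (by positivity)]
        have : (0:ℝ) ≤ n := Nat.cast_nonneg n
        linarith
      have := abs_sub_abs_le_abs_sub ((p n).eval (Y.1 j)) (g0 (Y.1 j))
      linarith
  have hz : (fun n => ∑' Y, D Y * ∏ j, (p n).eval (Y.1 j)) = fun _ => (0:ℝ) :=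
    funext fun n => (hpoly (p n)).tsum_eq
  rw [hz] at hlim
  have h0 := tendsto_nhds_unique hlim tendsto_const_nhds
  rw [tsum_eq_single Y0] at h0
  · have : ∏ j, g0 (Y0.1 j) = 1 := by
      refine Finset.prod_eq_one fun j _ => ?_
      simp only [g0]
      rw [tent_sum hq0 hq1 hzm hzp Y0 (Y0.2.2 j), if_pos ⟨j, rfl⟩]
    rw [this, mul_one] at h0
    exact h0
  · intro Y hY
    refine mul_eq_zero_of_right _ ?_
    by_contra hne
    replace hne := Finset.prod_ne_zero_iff.1 hne
    apply hY
    have hsub : Set.range Y.1 ⊆ Set.range Y0.1 := by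
      rintro _ ⟨j, rfl⟩
      by_contra hj
      apply hne j (Finset.mem_univ j)
      simp only [g0]
      rw [tent_sum hq0 hq1 hzm hzp Y0 (Y.2.2 j), if_neg hj]
    have heq : Set.range Y.1 = Set.range Y0.1 := by
      refine Set.eq_of_subset_of_ncard_le hsub ?_ (Set.finite_range _)
      rw [← Set.image_univ, ← Set.image_univ, Set.ncard_image_of_injective _ Y.2.1.injective,
        Set.ncard_image_of_injective _ Y0.2.1.injective]
    exact Subtype.ext ((StrictMono.range_inj Y.2.1 Y0.2.1).1 heq)

/-- Proposition 2.6(ii): a compactly supported probability measure on 𝔾_K satisfying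
the moment relations Σ_Y M(Y) S̃_{ν|K}(Y) = S̃_{ν|N}(X) for all partitions ν ∈ 𝕐(K)
must coincide with Λ^N_K(X,·). -/
theorem link_characterization (q zm zp : ℝ) (hq0 : 0 < q) (hq1 : q < 1) (hzm : zm < 0)
    (hzp : 0 < zp) (K d : ℕ) (hK : 1 ≤ K) (hd : 1 ≤ d) (X : Conf q zm zp (K + d))
    (M : Conf q zm zp K → ℝ) (hMnonneg : ∀ Y, 0 ≤ M Y) (hMtotal : HasSum M 1)
    (a b : ℝ) (hsupp : ∀ Y : Conf q zm zp K, ¬ (∀ i, Y.1 i ∈ Set.Icc a b) → M Y = 0)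
    (hmom : ∀ ν : Fin K → ℤ, Antitone ν → (∀ i, 0 ≤ ν i) →
      HasSum (fun Y : Conf q zm zp K => M Y * schurTilde q K ν Y.1)
        (schurTilde q (K + d) (padSig K (K + d) ν) X.1)) :
    ∀ Y : Conf q zm zp K, M Y = linkPow q zm zp K d X Y := by
  have hexp : ∀ m : Fin K → ℕ, StrictMono m →
      HasSum (fun Y => M Y * (detB m Y.1 / vprod Y.1 / Rn q m))
        (detB (padn m d) X.1 / vprod X.1 / Rn q (padn m d)) := by
    intro m hm
    have hle : ∀ j : Fin K, ∀ k : Fin K, j ≤ k → m j + ((k : ℕ) - (j : ℕ)) ≤ m k := by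
      intro j k
      obtain ⟨k, hk⟩ := k
      induction k with
      | zero =>
        intro h
        have : j = ⟨0, hk⟩ := Fin.ext (Nat.le_zero.1 h)
        subst this
        simp
      | succ k ih =>
        intro h
        by_cases hj : j = ⟨k+1, hk⟩
        · subst hj; simp
        · have hlt : (j : ℕ) < k + 1 := lt_of_le_of_ne h (fun h' => hj (Fin.ext h'))
          have h1 := ih (by omega) (Nat.lt_succ_iff.1 hlt)
          have h2 : m ⟨k, by omega⟩ < m ⟨k+1, hk⟩ := hm (by simp [Fin.lt_def])
          simp only at h1 ⊢
          omega
    have h0 : ∀ j : Fin K, (j : ℕ) ≤ m j := by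
      intro j
      have := hle ⟨0, by omega⟩ j (Nat.zero_le _)
      simp only at this
      omega
    let ν : Fin K → ℤ := fun i => (m (Fin.rev i) : ℤ) - ((Fin.rev i : Fin K) : ℕ)
    have hν1 : Antitone ν := by
      intro i j hij
      have h1 := hle (Fin.rev j) (Fin.rev i) (Fin.rev_le_rev.2 hij)
      have h2 : ((Fin.rev j : Fin K) : ℕ) ≤ ((Fin.rev i : Fin K) : ℕ) := Fin.rev_le_rev.2 hij
      simp only [ν]
      omega
    have hν0 : ∀ i, 0 ≤ ν i := by
      intro i
      have := h0 (Fin.rev i)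
      simp only [ν]
      omega
    have H := hmom ν hν1 hν0
    rw [schurTilde_eq (padSig K (K + d) ν) (padn m d)] at H
    · refine hs_congr H (fun Y => ?_) rfl
      rw [schurTilde_eq ν m]
      intro i
      simp only [ν, Fin.val_rev]
      have := i.2
      omega
    · intro i
      have hi := i.2
      unfold padSig
      split_ifs with h
      · rw [padn_ge m d (Fin.rev i) (Fin.rev ⟨i, h⟩) (by simp only [Fin.val_rev]; omega)]
        simp only [ν, Fin.val_rev]
        push_cast
        omega
      · rw [padn_lt m d (Fin.rev i) (by simp only [Fin.val_rev]; omega)]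
        simp only [Fin.val_rev]
        push_cast
        omega
  have hlink : ∀ m : Fin K → ℕ,
      HasSum (fun Y => linkPow q zm zp K d X Y * (detB m Y.1 / vprod Y.1 / Rn q m))
        (detB (padn m d) X.1 / vprod X.1 / Rn q (padn m d)) := by
    intro m
    refine hs_congr ((Ld_moment hq0 hq1 hzm hzp K m d X).mul_right (1 / vprod X.1))
      (fun Y => ?_) (by ring)
    rw [linkPow_eq]
    have hV := (vprod_pos _ Y.2.1).ne'
    field_simp
  obtain ⟨A, hA⟩ := conf_bdd X
  have hLsum : Summable (linkPow q zm zp K d X) := by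
    obtain ⟨C, _, hC⟩ := Ld_summable hq0 hq1 hzm hzp K A d
    obtain ⟨B, hB⟩ := detB_bound (fun i : Fin K => (i : ℕ)) A
    refine Summable.of_norm_bounded ((hC X hA).1.mul_right (B / |vprod X.1|)) fun Y => ?_
    rw [linkPow_eq, norm_mul, Real.norm_of_nonneg (Ld_nonneg hq0 hq1 K d _ _)]
    by_cases hL : Ld q zm zp K d X Y = 0
    · simp [hL]
    refine mul_le_mul_of_nonneg_left ?_ (Ld_nonneg hq0 hq1 K d _ _)
    rw [Real.norm_eq_abs, abs_div, vprod_eq_detB Y.1]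
    exact div_le_div_of_nonneg_right (hB _ (Ld_supp K d _ _ hA hL)) (abs_nonneg _)
  intro Y
  refine sub_eq_zero.1 (uniq hq0 hq1 hzm hzp (fun Y => M Y - linkPow q zm zp K d X Y)
    (hMtotal.summable.sub hLsum) (max A (max |a| |b|)) ?_ ?_ Y)
  · intro Y hY i
    by_cases hL : Ld q zm zp K d X Y = 0
    · have hMY : M Y ≠ 0 := by
        intro h
        apply hY
        simp only [h, linkPow_eq, hL]
        simp
      have hin : ∀ i, Y.1 i ∈ Set.Icc a b := by
        by_contra h
        exact hMY (hsupp Y h)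
      exact (abs_le_max_abs_abs (hin i).1 (hin i).2).trans (le_max_right _ _)
    · exact (Ld_supp K d _ _ hA hL i).trans (le_max_left _ _)
  · intro m hm
    have hR := Rn_ne_zero hq0 hq1 m hm.injective
    refine hs_congr (((hexp m hm).sub (hlink m)).mul_right (Rn q m)) (fun Y => ?_) (by simp)
    field_simp

end
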